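/- arXiv:1302.0925 — 2 statements merged into one kernel-verified Lean document; each statement's English description precedes it below -/
import Mathlib

section
/- Let N > 0, let m ≥ 1 be an integer and let k1, k2 be nonzero integers. Then there exists a real number σ_* = σ_*(k1,k2,m,N) > 0 and a sequence (c_p)_{p≥1} of reals with c_1 = α_1 which decays exponentially in p, such that (c_p) solves the MG eigenvalue recursion with constant shifts σ_p = σ_* for all p ≥ 1, and moreover σ_* ≥ (m N²/2) · k2²(k1² + k2²)/(4N⁴m²(k1² + k2² + 4m²) + k2⁴). -/
/-- The coefficients `α_p = 2(N⁴(mp)²(k1² + k2² + (mp)²) + k2⁴) / (m N² k2² (k1² + k2²))`. -/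
noncomputable def alphaMG (N : ℝ) (m : ℕ) (k1 k2 : ℤ) (p : ℕ) : ℝ :=
  2 * (N ^ 4 * ((m : ℝ) * (p : ℝ)) ^ 2
        * ((k1 : ℝ) ^ 2 + (k2 : ℝ) ^ 2 + ((m : ℝ) * (p : ℝ)) ^ 2) + (k2 : ℝ) ^ 4)
    / ((m : ℝ) * N ^ 2 * (k2 : ℝ) ^ 2 * ((k1 : ℝ) ^ 2 + (k2 : ℝ) ^ 2))

/-- A sequence `(c_p)_{p ≥ 1}` solves the MG eigenvalue recursion with shifts `(σ_p)` and
coefficients `(α_p)` if `σ_1 c_1 + c_2/α_2 = 0` and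
`σ_p c_p + c_{p+1}/α_{p+1} + c_{p−1}/α_{p−1} = 0` for all `p ≥ 2`. -/
def SolvesMGRecursion (α σ c : ℕ → ℝ) : Prop :=
  σ 1 * c 1 + c 2 / α 2 = 0 ∧
  ∀ p : ℕ, 2 ≤ p → σ p * c p + c (p + 1) / α (p + 1) + c (p - 1) / α (p - 1) = 0

/-- A sequence `(c_p)_{p ≥ 1}` decays exponentially in `p` if there are `C > 0` and
`λ ∈ (0,1)` with `|c_p| ≤ C λ^p` for all `p ≥ 1`. -/
def DecaysExponentially (c : ℕ → ℝ) : Prop :=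
  ∃ C : ℝ, 0 < C ∧ ∃ lam : ℝ, lam ∈ Set.Ioo (0 : ℝ) 1 ∧ ∀ p : ℕ, 1 ≤ p → |c p| ≤ C * lam ^ p

/-! Substituting `c_p = (-1)^(p+1) α_p d_p` turns the recursion into
`d_{p+1} = σ α_p d_p - d_{p-1}`, with `d_0 = 0` and `d_1 = 1`. For large `σ` the sequence `d` grows
and stays positive. The eigenvalue is the smallest `σ` for which `d` stays nonnegative. For `r > 0`,
an inequality `r d_p < d_{p+1}` propagates to all later indices once `α` is large, and it persists
for slightly smaller `σ`; at the smallest `σ` it must therefore fail for all large `p`, so `d`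
decays faster than every geometric sequence. The factor `α_p` costs nothing because
`σ α_p d_p = d_{p-1} + d_{p+1}`. The lower bound on `σ` is `0 < d_3 = σ² α_1 α_2 - 1`. -/

open Filter Topology Asymptotics

/-- The solution of the three-term recursion `d_{n+2} = s a_n d_{n+1} - d_n` started from `d_0 = 0`,
`d_1 = 1`. The coefficients of the MG recursion enter as `a_n = α_{n+1}`. -/
def shooting (a : ℕ → ℝ) (s : ℝ) : ℕ → ℝ
  | 0 => 0
  | 1 => 1
  | n + 2 => s * a n * shooting a s (n + 1) - shooting a s n

/-- The shifts for which the shooting sequence stays nonnegative; its least element is the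
eigenvalue. -/
def nonnegShifts (a : ℕ → ℝ) : Set ℝ :=
  {s | ∀ n, 0 ≤ shooting a s n}

/-- The candidate solution `c_p = (-1)^(p+1) α_p d_p` of the MG recursion with constant shift `s`,
where `d` is the shooting sequence. -/
def shootingSolution (α : ℕ → ℝ) (s : ℝ) (p : ℕ) : ℝ :=
  (-1) ^ (p + 1) * (α p * shooting (fun n => α (n + 1)) s p)

section Shooting

variable {a : ℕ → ℝ} {r s : ℝ} {n : ℕ}

@[simp]
lemma shooting_zero (a : ℕ → ℝ) (s : ℝ) : shooting a s 0 = 0 := rfl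

@[simp]
lemma shooting_one (a : ℕ → ℝ) (s : ℝ) : shooting a s 1 = 1 := rfl

lemma shooting_add_two (a : ℕ → ℝ) (s : ℝ) (n : ℕ) :
    shooting a s (n + 2) = s * a n * shooting a s (n + 1) - shooting a s n := rfl

lemma shooting_two (a : ℕ → ℝ) (s : ℝ) : shooting a s 2 = s * a 0 := by
  simp [shooting_add_two]

lemma shooting_three (a : ℕ → ℝ) (s : ℝ) : shooting a s 3 = s ^ 2 * (a 0 * a 1) - 1 := by
  rw [shooting_add_two, shooting_two, shooting_one]
  ring

lemma continuous_shooting (a : ℕ → ℝ) : ∀ n, Continuous fun s => shooting a s n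
  | 0 => continuous_const
  | 1 => continuous_const
  | n + 2 => ((continuous_id.mul continuous_const).mul (continuous_shooting a (n + 1))).sub
      (continuous_shooting a n)

lemma mul_shooting_lt_succ (hr : 0 < r) (ha : r + r⁻¹ ≤ s * a n) (hpos : 0 < shooting a s (n + 1))
    (hlt : r * shooting a s n < shooting a s (n + 1)) :
    r * shooting a s (n + 1) < shooting a s (n + 2) := by
  have hn : shooting a s n < r⁻¹ * shooting a s (n + 1) := by
    rwa [inv_mul_eq_div, lt_div_iff₀' hr]
  calc r * shooting a s (n + 1)
      = (r + r⁻¹) * shooting a s (n + 1) - r⁻¹ * shooting a s (n + 1) := by ring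
    _ ≤ s * a n * shooting a s (n + 1) - r⁻¹ * shooting a s (n + 1) := by gcongr
    _ < s * a n * shooting a s (n + 1) - shooting a s n := by gcongr
    _ = shooting a s (n + 2) := (shooting_add_two a s n).symm

lemma shooting_pos_of_mul_lt (hr : 0 < r) (ha : ∀ k ≥ n, r + r⁻¹ ≤ s * a k)
    (hnonneg : 0 ≤ shooting a s n) (hlt : r * shooting a s n < shooting a s (n + 1)) :
    ∀ k ≥ n, 0 < shooting a s (k + 1) := by
  suffices h : ∀ k ≥ n, 0 < shooting a s (k + 1) ∧ r * shooting a s k < shooting a s (k + 1) from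
    fun k hk => (h k hk).1
  intro k hk
  induction k, hk using Nat.le_induction with
  | base => exact ⟨(mul_nonneg hr.le hnonneg).trans_lt hlt, hlt⟩
  | succ k hk ih =>
    have hlt' := mul_shooting_lt_succ hr (ha k hk) ih.1 ih.2
    exact ⟨(mul_pos hr ih.1).trans hlt', hlt'⟩

lemma mem_nonnegShifts_of_mul_lt (hr : 0 < r) (ha : ∀ k ≥ n, r + r⁻¹ ≤ s * a k)
    (hnonneg : ∀ i ≤ n, 0 ≤ shooting a s i) (hlt : r * shooting a s n < shooting a s (n + 1)) :
    s ∈ nonnegShifts a := by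
  intro k
  rcases le_or_gt k n with hkn | hnk
  · exact hnonneg k hkn
  · obtain ⟨k, rfl⟩ := Nat.exists_eq_add_one_of_ne_zero (Nat.ne_zero_of_lt hnk)
    exact (shooting_pos_of_mul_lt hr ha (hnonneg n le_rfl) hlt k (Nat.le_of_lt_succ hnk)).le

lemma nonnegShifts_nonempty (ha : ∀ n, 0 < a n) (hlim : Tendsto a atTop atTop) :
    (nonnegShifts a).Nonempty := by
  obtain ⟨M, hM⟩ := hlim.inv_tendsto_atTop.bddAbove_range
  have hMa : ∀ k, 1 ≤ M * a k := fun k => (inv_le_iff_one_le_mul₀ (ha k)).1 (hM ⟨k, rfl⟩)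
  refine ⟨2 * M, mem_nonnegShifts_of_mul_lt (n := 0) one_pos (fun k _ => ?_) ?_ (by simp)⟩
  · linarith [hMa k]
  · simp

lemma isClosed_nonnegShifts (a : ℕ → ℝ) : IsClosed (nonnegShifts a) := by
  rw [nonnegShifts, Set.ofPred_forall]
  exact isClosed_iInter fun n => isClosed_le continuous_const (continuous_shooting a n)

lemma shooting_pos_of_mem_nonnegShifts (hs : s ∈ nonnegShifts a) (n : ℕ) :
    0 < shooting a s (n + 1) := by
  induction n with
  | zero => simp
  | succ n ih =>
    -- A zero at index `n + 2` would force `d_{n+3} = -d_{n+1} < 0`.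
    refine (hs (n + 2)).lt_of_ne fun hzero => ?_
    have hnext := hs (n + 3)
    rw [shooting_add_two, ← hzero] at hnext
    linarith

lemma pos_of_mem_nonnegShifts (ha : 0 < a 0) (hs : s ∈ nonnegShifts a) : 0 < s :=
  pos_of_mul_pos_left (shooting_two a s ▸ shooting_pos_of_mem_nonnegShifts hs 1) ha.le

lemma one_lt_sq_mul_of_mem_nonnegShifts (hs : s ∈ nonnegShifts a) : 1 < s ^ 2 * (a 0 * a 1) :=
  sub_pos.1 (shooting_three a s ▸ shooting_pos_of_mem_nonnegShifts hs 2)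

lemma exists_isLeast_nonnegShifts (ha : ∀ n, 0 < a n) (hlim : Tendsto a atTop atTop) :
    ∃ s, IsLeast (nonnegShifts a) s :=
  ⟨_, (isClosed_nonnegShifts a).isLeast_csInf (nonnegShifts_nonempty ha hlim)
    ⟨0, fun _ hs => (pos_of_mem_nonnegShifts (ha 0) hs).le⟩⟩

lemma eventually_shooting_nonneg (hs : s ∈ nonnegShifts a) (n : ℕ) :
    ∀ᶠ t in 𝓝 s, ∀ i ≤ n, 0 ≤ shooting a t i := by
  refine (eventually_all_finite (Set.finite_Iic n)).2 fun i _ => ?_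
  cases i with
  | zero => simp
  | succ i =>
    exact ((continuous_shooting a (i + 1)).continuousAt.eventually_const_lt
      (shooting_pos_of_mem_nonnegShifts hs i)).mono fun _ => le_of_lt

lemma shooting_succ_le_of_isLeast (hs : IsLeast (nonnegShifts a) s) (hs0 : 0 < s) (hr : 0 < r)
    (ha : ∀ k ≥ n, 2 * (r + r⁻¹) / s ≤ a k) : shooting a s (n + 1) ≤ r * shooting a s n := by
  by_contra! hlt
  have hgrow : ∀ᶠ t in 𝓝 s, r * shooting a t n < shooting a t (n + 1) :=
    ((continuous_shooting a n).const_mul r).continuousAt.eventually_lt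
      (continuous_shooting a (n + 1)).continuousAt hlt
  have hnear : ∀ᶠ t in 𝓝 s, s / 2 < t := lt_mem_nhds (half_lt_self hs0)
  have hbelow : ∃ᶠ t in 𝓝 s, t < s := frequently_lt_nhds s
  obtain ⟨t, hts, hgrow, hnonneg, hst⟩ :=
    (hbelow.and_eventually (hgrow.and ((eventually_shooting_nonneg hs.1 n).and hnear))).exists
  have ht : 0 < t := (half_pos hs0).trans hst
  have hta : ∀ k ≥ n, r + r⁻¹ ≤ t * a k := fun k hk =>
    calc r + r⁻¹ = s / 2 * (2 * (r + r⁻¹) / s) := by field_simp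
      _ ≤ t * a k := by gcongr; exact ha k hk
  exact hts.not_ge (hs.2 (mem_nonnegShifts_of_mul_lt hr hta hnonneg hgrow))

lemma eventually_shooting_succ_le_of_isLeast (hs : IsLeast (nonnegShifts a) s) (hs0 : 0 < s)
    (hlim : Tendsto a atTop atTop) (hr : 0 < r) :
    ∀ᶠ n in atTop, shooting a s (n + 1) ≤ r * shooting a s n := by
  have hlarge : ∀ᶠ n in atTop, ∀ k ≥ n, 2 * (r + r⁻¹) / s ≤ a k :=
    eventually_forall_ge_atTop.2 (hlim.eventually_ge_atTop _)
  exact hlarge.mono fun _ => shooting_succ_le_of_isLeast hs hs0 hr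

end Shooting

section Decay

lemma isBigO_pow_of_eventually_norm_succ_le {E : Type*} [SeminormedAddCommGroup E] {u : ℕ → E}
    {r : ℝ} (hr : 0 < r) (hu : ∀ᶠ n in atTop, ‖u (n + 1)‖ ≤ r * ‖u n‖) :
    u =O[atTop] fun n => r ^ n := by
  obtain ⟨N, hN⟩ := eventually_atTop.1 hu
  refine IsBigO.of_bound (‖u N‖ / r ^ N) (eventually_atTop.2 ⟨N, fun n hn => ?_⟩)
  obtain ⟨k, rfl⟩ := Nat.exists_eq_add_of_le hn
  calc ‖u (N + k)‖ ≤ r ^ k * ‖u N‖ :=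
        le_geom (u := fun k => ‖u (N + k)‖) hr.le k fun j _ => hN (N + j) (Nat.le_add_right N j)
    _ = ‖u N‖ / r ^ N * ‖r ^ (N + k)‖ := by
        rw [Real.norm_of_nonneg (by positivity), pow_add]
        field_simp

lemma decaysExponentially_of_isBigO {c : ℕ → ℝ} {r : ℝ} (hr : r ∈ Set.Ioo 0 1)
    (hc : (fun n => c (n + 1)) =O[atTop] fun n => r ^ n) : DecaysExponentially c := by
  obtain ⟨C, hC, hbound⟩ := bound_of_isBigO_nat_atTop hc
  have hr0 : 0 < r := hr.1
  refine ⟨C / r, by positivity, r, hr, fun p hp => ?_⟩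
  obtain ⟨n, rfl⟩ := Nat.exists_eq_add_of_le' hp
  calc |c (n + 1)| ≤ C * ‖r ^ n‖ := hbound (by positivity)
    _ = C / r * r ^ (n + 1) := by
        rw [Real.norm_of_nonneg (by positivity), pow_succ]
        field_simp

end Decay

section Recursion

variable {α : ℕ → ℝ} {s : ℝ}

lemma shootingSolution_one (α : ℕ → ℝ) (s : ℝ) : shootingSolution α s 1 = α 1 := by
  simp [shootingSolution]

lemma shootingSolution_div {p : ℕ} (hα : α p ≠ 0) :
    shootingSolution α s p / α p = (-1) ^ (p + 1) * shooting (fun n => α (n + 1)) s p := by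
  rw [shootingSolution, mul_div_assoc, mul_div_cancel_left₀ _ hα]

lemma shootingSolution_succ (hs : s ≠ 0) (n : ℕ) :
    shootingSolution α s (n + 1) = (-1) ^ n / s *
      (shooting (fun n => α (n + 1)) s n + shooting (fun n => α (n + 1)) s (n + 2)) := by
  rw [shootingSolution, shooting_add_two]
  field_simp
  ring

lemma solvesMGRecursion_shootingSolution (hα : ∀ n, α (n + 1) ≠ 0) (s : ℝ) :
    SolvesMGRecursion α (fun _ => s) (shootingSolution α s) := by
  refine ⟨?_, fun p hp => ?_⟩
  · rw [shootingSolution_one, shootingSolution_div (hα 1), shooting_two]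
    ring
  · obtain ⟨n, rfl⟩ := Nat.exists_eq_add_of_le' hp
    rw [Nat.add_succ_sub_one, shootingSolution_div (hα (n + 2)), shootingSolution_div (hα n),
      shooting_add_two _ _ (n + 1), shootingSolution]
    ring

lemma decaysExponentially_shootingSolution (hs : IsLeast (nonnegShifts fun n => α (n + 1)) s)
    (hs0 : 0 < s) (hlim : Tendsto α atTop atTop) :
    DecaysExponentially (shootingSolution α s) := by
  set d := shooting (fun n => α (n + 1)) s
  have hnorm : ∀ n, ‖d n‖ = d n := fun n => Real.norm_of_nonneg (hs.1 n)
  have hratio : ∀ᶠ n in atTop, ‖d (n + 1)‖ ≤ 1 / 2 * ‖d n‖ := by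
    simp only [hnorm]
    exact eventually_shooting_succ_le_of_isLeast hs hs0 ((tendsto_add_atTop_iff_nat 1).2 hlim)
      one_half_pos
  have hd : d =O[atTop] fun n => (1 / 2 : ℝ) ^ n :=
    isBigO_pow_of_eventually_norm_succ_le one_half_pos hratio
  have hd_succ : (fun n => d (n + 1)) =O[atTop] d := IsBigO.of_bound _ hratio
  have hd_two : (fun n => d (n + 2)) =O[atTop] d :=
    (hd_succ.comp_tendsto (tendsto_add_atTop_nat 1)).trans hd_succ
  have hsign : (fun n : ℕ => (-1) ^ n / s) =O[atTop] fun _ => (1 : ℝ) :=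
    IsBigO.of_bound ‖s⁻¹‖ (by simp)
  refine decaysExponentially_of_isBigO (r := 1 / 2) (by norm_num) ?_
  simp only [shootingSolution_succ hs0.ne']
  simpa only [one_mul] using hsign.mul (hd.add (hd_two.trans hd))

theorem exists_decaying_solvesMGRecursion (hpos : ∀ n, 0 < α (n + 1))
    (hlim : Tendsto α atTop atTop) :
    ∃ s : ℝ, 0 < s ∧ 1 < s ^ 2 * (α 1 * α 2) ∧
      ∃ c : ℕ → ℝ, c 1 = α 1 ∧ DecaysExponentially c ∧ SolvesMGRecursion α (fun _ => s) c := by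
  obtain ⟨s, hs⟩ := exists_isLeast_nonnegShifts hpos ((tendsto_add_atTop_iff_nat 1).2 hlim)
  have hs0 : 0 < s := pos_of_mem_nonnegShifts (hpos 0) hs.1
  exact ⟨s, hs0, one_lt_sq_mul_of_mem_nonnegShifts hs.1, shootingSolution α s,
    shootingSolution_one α s, decaysExponentially_shootingSolution hs hs0 hlim,
    solvesMGRecursion_shootingSolution (fun n => (hpos n).ne') s⟩

end Recursion

section AlphaMG

variable {N : ℝ} {m : ℕ} {k1 k2 : ℤ}

lemma alphaMG_pos (hN : N ≠ 0) (hm : m ≠ 0) (hk2 : k2 ≠ 0) (p : ℕ) : 0 < alphaMG N m k1 k2 p := by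
  unfold alphaMG
  positivity

lemma monotone_alphaMG (N : ℝ) (m : ℕ) (k1 k2 : ℤ) : Monotone (alphaMG N m k1 k2) := by
  intro p q hpq
  unfold alphaMG
  gcongr

lemma tendsto_alphaMG_atTop (hN : N ≠ 0) (hm : m ≠ 0) (hk2 : k2 ≠ 0) :
    Tendsto (alphaMG N m k1 k2) atTop atTop := by
  have hsq : Tendsto (fun p : ℕ => ((m : ℝ) * p) ^ 2) atTop atTop :=
    (tendsto_pow_atTop two_ne_zero).comp
      (tendsto_natCast_atTop_atTop.const_mul_atTop (by positivity))
  have hquartic := (hsq.const_mul_atTop (show 0 < N ^ 4 by positivity)).atTop_mul_atTop₀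
    (tendsto_atTop_add_const_left _ ((k1 : ℝ) ^ 2 + (k2 : ℝ) ^ 2) hsq)
  exact ((tendsto_atTop_add_const_right _ _ hquartic).const_mul_atTop two_pos).atTop_div_const
    (by positivity)

lemma one_div_alphaMG_two (N : ℝ) (m : ℕ) (k1 k2 : ℤ) :
    1 / alphaMG N m k1 k2 2 =
      ((m : ℝ) * N ^ 2 / 2) * ((k2 : ℝ) ^ 2 * ((k1 : ℝ) ^ 2 + (k2 : ℝ) ^ 2))
        / (4 * N ^ 4 * (m : ℝ) ^ 2 * ((k1 : ℝ) ^ 2 + (k2 : ℝ) ^ 2 + 4 * (m : ℝ) ^ 2)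
            + (k2 : ℝ) ^ 4) := by
  rw [alphaMG, one_div_div, div_mul_eq_mul_div, div_div]
  push_cast
  congr 1 <;> ring

end AlphaMG

/-- **Unstable eigenvalue for the non-diffusive linearized MG operator (`ε_κ = 0`):** for
`N > 0`, an integer `m ≥ 1` and nonzero integers `k1, k2`, there exist `σ_* > 0` and an
exponentially decaying sequence `(c_p)` with `c_1 = α_1` solving the MG eigenvalue
recursion with constant shifts `σ_p = σ_*`, and moreover
`σ_* ≥ (mN²/2)·k2²(k1²+k2²)/(4N⁴m²(k1²+k2²+4m²)+k2⁴)`. -/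
theorem mg_nondiffusive_eigenvalue_exists (N : ℝ) (hN : 0 < N)
    (m : ℕ) (hm : 1 ≤ m) (k1 k2 : ℤ) (hk1 : k1 ≠ 0) (hk2 : k2 ≠ 0) :
    ∃ σstar : ℝ, 0 < σstar ∧
      ((m : ℝ) * N ^ 2 / 2) * ((k2 : ℝ) ^ 2 * ((k1 : ℝ) ^ 2 + (k2 : ℝ) ^ 2))
          / (4 * N ^ 4 * (m : ℝ) ^ 2 * ((k1 : ℝ) ^ 2 + (k2 : ℝ) ^ 2 + 4 * (m : ℝ) ^ 2)
              + (k2 : ℝ) ^ 4) ≤ σstar ∧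
      ∃ c : ℕ → ℝ, c 1 = alphaMG N m k1 k2 1 ∧ DecaysExponentially c ∧
        SolvesMGRecursion (alphaMG N m k1 k2) (fun _ => σstar) c := by
  have hm0 : m ≠ 0 := Nat.one_le_iff_ne_zero.1 hm
  have hpos : ∀ p, 0 < alphaMG N m k1 k2 p := alphaMG_pos hN.ne' hm0 hk2
  obtain ⟨s, hs, hlower, hc⟩ := exists_decaying_solvesMGRecursion (fun n => hpos (n + 1))
    (tendsto_alphaMG_atTop hN.ne' hm0 hk2)
  refine ⟨s, hs, ?_, hc⟩
  rw [← one_div_alphaMG_two, div_le_iff₀ (hpos 2)]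
  refine (one_le_sq_iff₀ (mul_pos hs (hpos 2)).le).1 ?_
  calc 1 ≤ s ^ 2 * (alphaMG N m k1 k2 1 * alphaMG N m k1 k2 2) := hlower.le
    _ ≤ s ^ 2 * (alphaMG N m k1 k2 2 * alphaMG N m k1 k2 2) := by
        gcongr
        · exact (hpos 2).le
        · exact monotone_alphaMG N m k1 k2 one_le_two
    _ = (s * alphaMG N m k1 k2 2) ^ 2 := by ring
end

section
/- Fix N > 0, ε_κ > 0, an integer m ≥ 1, and γ ∈ (0, 1/2). Then the sequence f(j) = (m N²/2) · j²(j⁴ + j²)/(4N⁴m²(j⁴ + j² + 4m²) + j⁴) − ε_κ(j⁴ + j² + 4m²)^γ tends to +∞ as the integer j → ∞. Consequently, in the fractional dissipation range γ ∈ (0, 1/2), the lower bound for the unstable eigenvalue at frequencies k1 = j², k2 = j diverges, i.e. the linearized fractionally diffusive MG operator has eigenvalues of arbitrarily large real part. -/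
/-!
As `x → ∞` the growth term is equivalent to a positive multiple of `x²`. The dissipation term is
the `γ`-th power of a quantity equivalent to `x⁴`, hence negligible against the square root `x²` of
`x⁴` when `γ < 1/2`. The difference is therefore equivalent to a positive multiple of `x²`.
-/

open Filter Asymptotics

theorem isLittleO_rpow_rpow_atTop {p q : ℝ} (hpq : p < q) :
    (fun x : ℝ => x ^ p) =o[atTop] fun x => x ^ q := by
  have hne : ∀ᶠ x : ℝ in atTop, x ^ q = 0 → x ^ p = 0 := by
    filter_upwards [eventually_gt_atTop 0] with x hx h
    exact absurd h (Real.rpow_pos_of_pos hx q).ne'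
  refine (isLittleO_iff_tendsto' hne).2 ((tendsto_rpow_neg_atTop (sub_pos.2 hpq)).congr' ?_)
  filter_upwards [eventually_gt_atTop 0] with x hx
  rw [neg_sub, Real.rpow_sub hx]

section Biquadratic

variable {𝕜 : Type*} [NormedField 𝕜] [LinearOrder 𝕜] [IsStrictOrderedRing 𝕜] [OrderTopology 𝕜]

theorem isEquivalent_biquadratic_atTop {a : 𝕜} (ha : a ≠ 0) (b c : 𝕜) :
    (fun x : 𝕜 => a * x ^ 4 + b * x ^ 2 + c) ~[atTop] fun x => a * x ^ 4 := by
  have hquad : (fun x : 𝕜 => b * x ^ 2) =o[atTop] fun x => a * x ^ 4 :=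
    ((isLittleO_pow_pow_atTop_of_lt (by norm_num)).const_mul_left b).const_mul_right ha
  have hconst : (fun _ : 𝕜 => c) =o[atTop] fun x => a * x ^ 4 := by
    simpa only [pow_zero, mul_one] using
      ((isLittleO_pow_pow_atTop_of_lt (𝕜 := 𝕜) (show 0 < 4 by norm_num)).const_mul_left
        c).const_mul_right ha
  exact (IsEquivalent.refl.add_isLittleO hquad).add_isLittleO hconst

theorem isEquivalent_sextic_div_quartic_atTop {A : 𝕜} (hA : A + 1 ≠ 0) (K C : 𝕜) :
    (fun x : 𝕜 => K * (x ^ 2 * (x ^ 4 + x ^ 2)) / (A * (x ^ 4 + x ^ 2 + C) + x ^ 4))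
      ~[atTop] fun x => K / (A + 1) * x ^ 2 := by
  have hnum : (fun x : 𝕜 => x ^ 4 + x ^ 2) ~[atTop] fun x => x ^ 4 := by
    simpa only [one_mul, add_zero] using isEquivalent_biquadratic_atTop (one_ne_zero' 𝕜) 1 0
  have hden : (fun x : 𝕜 => A * (x ^ 4 + x ^ 2 + C) + x ^ 4) ~[atTop] fun x => (A + 1) * x ^ 4 :=
    (isEquivalent_biquadratic_atTop hA A (A * C)).congr_left (.of_eq (by funext x; ring))
  have hquot := ((IsEquivalent.refl (u := fun x : 𝕜 => K * x ^ 2)).mul hnum).div hden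
  refine (hquot.congr_left (.of_eq ?_)).congr_right ?_
  · funext x
    simp only [Pi.div_apply, Pi.mul_apply, mul_assoc]
  · filter_upwards [eventually_ne_atTop 0] with x hx
    simp only [Pi.div_apply, Pi.mul_apply]
    field_simp

end Biquadratic

theorem isLittleO_biquadratic_rpow_sq_atTop {γ : ℝ} (hγ : γ < 1 / 2) (C : ℝ) :
    (fun x : ℝ => (x ^ 4 + x ^ 2 + C) ^ γ) =o[atTop] fun x => x ^ 2 := by
  have hequiv : (fun x : ℝ => x ^ 4 + x ^ 2 + C) ~[atTop] fun x => x ^ 4 := by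
    simpa only [one_mul] using isEquivalent_biquadratic_atTop (one_ne_zero' ℝ) 1 C
  have htop : Tendsto (fun x : ℝ => x ^ 4 + x ^ 2 + C) atTop atTop :=
    hequiv.symm.tendsto_atTop (tendsto_pow_atTop four_ne_zero)
  have hsqrt : (fun x : ℝ => (x ^ 4 + x ^ 2 + C) ^ (1 / 2 : ℝ)) ~[atTop] fun x => x ^ 2 :=
    (hequiv.rpow (fun x => by positivity)).congr_right <| .of_eq <| by
      funext x
      rw [Pi.pow_apply, ← Real.sqrt_eq_rpow, show x ^ 4 = (x ^ 2) ^ 2 by ring,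
        Real.sqrt_sq (sq_nonneg x)]
  exact ((isLittleO_rpow_rpow_atTop hγ).comp_tendsto htop).trans_isEquivalent hsqrt

theorem mg_fractional_lower_bound_diverges_general {N γ m : ℝ} (hN : N ≠ 0) (hm : 0 < m)
    (hγ : γ < 1 / 2) (εκ : ℝ) :
    Tendsto
      (fun x : ℝ =>
        (m * N ^ 2 / 2) * (x ^ 2 * (x ^ 4 + x ^ 2))
            / (4 * N ^ 4 * m ^ 2 * (x ^ 4 + x ^ 2 + 4 * m ^ 2) + x ^ 4)
          - εκ * (x ^ 4 + x ^ 2 + 4 * m ^ 2) ^ γ)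
      atTop atTop := by
  have hc : 0 < m * N ^ 2 / 2 / (4 * N ^ 4 * m ^ 2 + 1) := by positivity
  have hgrowth := isEquivalent_sextic_div_quartic_atTop (A := 4 * N ^ 4 * m ^ 2) (by positivity)
    (m * N ^ 2 / 2) (4 * m ^ 2)
  have hdissipation := ((isLittleO_biquadratic_rpow_sq_atTop hγ (4 * m ^ 2)).const_mul_left
    εκ).const_mul_right hc.ne'
  exact (hgrowth.sub_isLittleO hdissipation).symm.tendsto_atTop
    ((tendsto_pow_atTop two_ne_zero).const_mul_atTop hc)

/-- **Divergence of the eigenvalue lower bound for `γ ∈ (0, 1/2)`:** fix `N > 0`,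
`ε_κ > 0`, an integer `m ≥ 1` and `γ ∈ (0, 1/2)`.  Then
`f(j) = (mN²/2)·j²(j⁴+j²)/(4N⁴m²(j⁴+j²+4m²)+j⁴) − ε_κ(j⁴+j²+4m²)^γ → +∞` as the integer
`j → ∞`; hence the linearized fractionally diffusive MG operator has eigenvalues of
arbitrarily large real part. -/
theorem mg_fractional_lower_bound_diverges (N εκ γ : ℝ) (hN : 0 < N) (hε : 0 < εκ)
    (hγ : γ ∈ Set.Ioo (0 : ℝ) (1 / 2)) (m : ℕ) (hm : 1 ≤ m) :
    Filter.Tendsto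
      (fun j : ℕ =>
        ((m : ℝ) * N ^ 2 / 2) * ((j : ℝ) ^ 2 * ((j : ℝ) ^ 4 + (j : ℝ) ^ 2))
            / (4 * N ^ 4 * (m : ℝ) ^ 2 * ((j : ℝ) ^ 4 + (j : ℝ) ^ 2 + 4 * (m : ℝ) ^ 2)
                + (j : ℝ) ^ 4)
          - εκ * ((j : ℝ) ^ 4 + (j : ℝ) ^ 2 + 4 * (m : ℝ) ^ 2) ^ γ)
      Filter.atTop Filter.atTop :=
  (mg_fractional_lower_bound_diverges_general hN.ne' (Nat.cast_pos.2 hm) hγ.2 εκ).comp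
    tendsto_natCast_atTop_atTop
end
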